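/- Let n ≥ 1 be an integer and let σ be the ℝ-algebra automorphism of the polynomial ring ℝ[s,t] induced by the linear rotation ρ_{2π/n}, i.e. σ(s) = s·cos(2π/n) + t·sin(2π/n) and σ(t) = −s·sin(2π/n) + t·cos(2π/n). Then the subalgebra of σ-invariant polynomials {f ∈ ℝ[s,t] : σ(f) = f} equals the ℝ-subalgebra of ℝ[s,t] generated by the three polynomials x_n, y_n and s² + t². -/

import Mathlib

/-!
Read real polynomials in `s, t` as functions of `w = s + i t`, so that `x_m + i y_m = w ^ m`,
`s² + t² = w w̄`, and the rotation `σ` through `θ` replaces `w` by `u⁻¹ w` with `u = e^{iθ}`.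

With `z = s² + t²`, the products `z ^ k x_m` and `z ^ k y_m` span `ℝ[s,t]`: multiplying
`w ^ (m + 1)` by `s = (w + w̄) / 2` or `t = (w - w̄) / 2i` gives a combination of `w ^ (m + 2)` and
`z w ^ m`. Unlike `σ`, the operator `σ + σ⁻¹` is always diagonalizable over `ℝ`: these products are
eigenvectors, of eigenvalue `2 Re (u ^ m)`. A `σ`-invariant polynomial has eigenvalue `2`, so it is
a combination of products with `u ^ m = 1`. If `u` is a primitive `n`-th root of unity, this means
`n ∣ m`, and then `x_m + i y_m` is a power of `x_n + i y_n`.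
-/

open Real MvPolynomial

/-- `x_n` as a polynomial in `ℝ[s,t]` (variable `0` is `s`, variable `1` is `t`). -/
noncomputable def XnPoly (n : ℕ) : MvPolynomial (Fin 2) ℝ :=
  ∑ j ∈ Finset.range (n / 2 + 1),
    C ((-1 : ℝ) ^ j * (n.choose (2 * j) : ℝ)) * X 1 ^ (2 * j) * X 0 ^ (n - 2 * j)

/-- `y_n` as a polynomial in `ℝ[s,t]`. -/
noncomputable def YnPoly (n : ℕ) : MvPolynomial (Fin 2) ℝ :=
  ∑ j ∈ Finset.range ((n + 1) / 2),
    C ((-1 : ℝ) ^ j * (n.choose (2 * j + 1) : ℝ)) * X 1 ^ (2 * j + 1) * X 0 ^ (n - 2 * j - 1)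

/-- The ℝ-algebra endomorphism of `ℝ[s,t]` induced by the rotation `ρ_{2π/n}`:
`σ(s) = s cos(2π/n) + t sin(2π/n)`, `σ(t) = −s sin(2π/n) + t cos(2π/n)`. -/
noncomputable def rotAut (n : ℕ) : MvPolynomial (Fin 2) ℝ →ₐ[ℝ] MvPolynomial (Fin 2) ℝ :=
  aeval ![C (Real.cos (2 * π / n)) * X 0 + C (Real.sin (2 * π / n)) * X 1,
          - C (Real.sin (2 * π / n)) * X 0 + C (Real.cos (2 * π / n)) * X 1]

open scoped ComplexConjugate

lemma sum_range_eq_sum_even_add_sum_odd {M : Type*} [AddCommMonoid M] (f : ℕ → M) (N : ℕ) :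
    ∑ k ∈ Finset.range N, f k =
      ∑ j ∈ Finset.range ((N + 1) / 2), f (2 * j) + ∑ j ∈ Finset.range (N / 2), f (2 * j + 1) := by
  induction N with
  | zero => simp
  | succ N ih =>
    rw [Finset.sum_range_succ, ih]
    obtain ⟨k, rfl | rfl⟩ := Nat.even_or_odd' N
    · rw [show (2 * k + 1 + 1) / 2 = k + 1 by lia, show (2 * k + 1) / 2 = k by lia,
        show 2 * k / 2 = k by lia, Finset.sum_range_succ, add_right_comm]
    · rw [show (2 * k + 1 + 1 + 1) / 2 = k + 1 by lia, show (2 * k + 1 + 1) / 2 = k + 1 by lia,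
        show (2 * k + 1) / 2 = k by lia, Finset.sum_range_succ (fun j => f (2 * j + 1)), add_assoc]

lemma eq_eigenspace_of_sup_eq_top {K V : Type*} [CommRing K] [IsDomain K] [AddCommGroup V]
    [Module K V] [Module.IsTorsionFree K V] {T : Module.End K V} {μ : K} {W : Submodule K V}
    (hW : W ≤ T.eigenspace μ) (htop : W ⊔ ⨆ ν ≠ μ, T.eigenspace ν = ⊤) : W = T.eigenspace μ :=
  eq_of_le_of_inf_le_of_sup_le hW ((T.eigenspaces_iSupIndep μ).eq_bot.trans_le bot_le)
    (le_top.trans htop.ge)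

lemma circle_re_eq_one_iff {u : Circle} : (u : ℂ).re = 1 ↔ u = 1 := by
  refine ⟨fun h => ?_, fun h => by simp [h]⟩
  have him : (u : ℂ).im = 0 := by
    have hnorm := Circle.normSq_coe u
    rw [Complex.normSq_apply, h] at hnorm
    simpa using hnorm
  exact Circle.ext (Complex.ext h him)

lemma isPrimitiveRoot_circle_exp {n : ℕ} (hn : n ≠ 0) :
    IsPrimitiveRoot (Circle.exp (2 * π / n)) n := by
  have hexp : (Circle.exp (2 * π / n) : ℂ) = Complex.exp (2 * π * Complex.I / n) := by
    rw [Circle.coe_exp]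
    push_cast
    rw [div_mul_eq_mul_div]
  have hcoe : IsPrimitiveRoot (Circle.exp (2 * π / n) : ℂ) n :=
    hexp ▸ Complex.isPrimitiveRoot_exp n hn
  exact hcoe.of_map_of_injective (f := Circle.coeHom) Circle.coe_injective

/-- Evaluation of a polynomial in `ℝ[s,t]` at the point `s + i t = c` of the plane, identified
with `ℂ` so that rotations become multiplications. -/
noncomputable def evalAt (c : ℂ) : MvPolynomial (Fin 2) ℝ →ₐ[ℝ] ℝ :=
  aeval ![c.re, c.im]

@[simp] lemma evalAt_X_zero (c : ℂ) : evalAt c (X 0) = c.re := by simp [evalAt]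

@[simp] lemma evalAt_X_one (c : ℂ) : evalAt c (X 1) = c.im := by simp [evalAt]

lemma ext_evalAt {p q : MvPolynomial (Fin 2) ℝ} (h : ∀ c, evalAt c p = evalAt c q) : p = q := by
  refine MvPolynomial.funext fun v => ?_
  have hv : ![v 0, v 1] = v := by
    ext i
    fin_cases i <;> rfl
  simpa [evalAt, hv, coe_aeval_eq_eval] using h ⟨v 0, v 1⟩

lemma evalAt_XnPoly_add_evalAt_YnPoly_mul_I (c : ℂ) (n : ℕ) :
    (evalAt c (XnPoly n) : ℂ) + evalAt c (YnPoly n) * Complex.I = c ^ n := by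
  have hI (j : ℕ) : Complex.I ^ (2 * j) = (-1) ^ j := by rw [pow_mul, Complex.I_sq]
  conv_rhs => rw [← Complex.re_add_im c, add_comm, add_pow, sum_range_eq_sum_even_add_sum_odd,
    show (n + 1 + 1) / 2 = n / 2 + 1 by lia]
  simp only [XnPoly, YnPoly, map_sum, map_mul, map_pow, evalAt_X_zero, evalAt_X_one,
    ← algebraMap_eq, AlgHom.commutes, Algebra.algebraMap_self, RingHom.id_apply]
  push_cast
  rw [Finset.sum_mul]
  congr 1 <;> refine Finset.sum_congr rfl fun j _ => ?_
  · rw [mul_pow, hI]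
    ring
  · rw [mul_pow, pow_succ Complex.I, hI, Nat.sub_sub]
    ring

@[simp] lemma evalAt_XnPoly (c : ℂ) (n : ℕ) : evalAt c (XnPoly n) = (c ^ n).re := by
  rw [← evalAt_XnPoly_add_evalAt_YnPoly_mul_I]
  simp

@[simp] lemma evalAt_YnPoly (c : ℂ) (n : ℕ) : evalAt c (YnPoly n) = (c ^ n).im := by
  rw [← evalAt_XnPoly_add_evalAt_YnPoly_mul_I]
  simp

section Multiplication

variable (m n : ℕ)

lemma XnPoly_zero : XnPoly 0 = 1 := by simp [XnPoly]

lemma YnPoly_zero : YnPoly 0 = 0 := by simp [YnPoly]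

lemma XnPoly_one : XnPoly 1 = X 0 := by simp [XnPoly]

lemma YnPoly_one : YnPoly 1 = X 1 := by simp [YnPoly]

lemma XnPoly_add : XnPoly (m + n) = XnPoly m * XnPoly n - YnPoly m * YnPoly n :=
  ext_evalAt fun c => by simp [pow_add]

lemma YnPoly_add : YnPoly (m + n) = XnPoly m * YnPoly n + YnPoly m * XnPoly n :=
  ext_evalAt fun c => by simp [pow_add]

lemma XnPoly_succ_mul_X_zero : XnPoly (m + 1) * X 0 =
    (2⁻¹ : ℝ) • (XnPoly (m + 2) + (X 0 ^ 2 + X 1 ^ 2) * XnPoly m) :=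
  ext_evalAt fun c => by
    simp only [map_add, map_mul, map_pow, map_smul, evalAt_X_zero, evalAt_X_one,
      evalAt_XnPoly, pow_succ, Complex.mul_re, Complex.mul_im, smul_eq_mul]
    ring

lemma YnPoly_succ_mul_X_zero : YnPoly (m + 1) * X 0 =
    (2⁻¹ : ℝ) • (YnPoly (m + 2) + (X 0 ^ 2 + X 1 ^ 2) * YnPoly m) :=
  ext_evalAt fun c => by
    simp only [map_add, map_mul, map_pow, map_smul, evalAt_X_zero, evalAt_X_one,
      evalAt_YnPoly, pow_succ, Complex.mul_re, Complex.mul_im, smul_eq_mul]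
    ring

lemma XnPoly_succ_mul_X_one : XnPoly (m + 1) * X 1 =
    (2⁻¹ : ℝ) • (YnPoly (m + 2) - (X 0 ^ 2 + X 1 ^ 2) * YnPoly m) :=
  ext_evalAt fun c => by
    simp only [map_add, map_sub, map_mul, map_pow, map_smul, evalAt_X_zero, evalAt_X_one,
      evalAt_XnPoly, evalAt_YnPoly, pow_succ, Complex.mul_re, Complex.mul_im, smul_eq_mul]
    ring

lemma YnPoly_succ_mul_X_one : YnPoly (m + 1) * X 1 =
    (2⁻¹ : ℝ) • ((X 0 ^ 2 + X 1 ^ 2) * XnPoly m - XnPoly (m + 2)) :=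
  ext_evalAt fun c => by
    simp only [map_sub, map_add, map_mul, map_pow, map_smul, evalAt_X_zero, evalAt_X_one,
      evalAt_XnPoly, evalAt_YnPoly, pow_succ, Complex.mul_re, Complex.mul_im, smul_eq_mul]
    ring

end Multiplication

/-- The products `(s² + t²) ^ k x_m` and `(s² + t²) ^ k y_m`: in polar coordinates, these are
`r ^ (2 k + m) cos (m φ)` and `r ^ (2 k + m) sin (m φ)`. -/
def polarMonomials : Set (MvPolynomial (Fin 2) ℝ) :=
  {p | ∃ k m : ℕ, p = (X 0 ^ 2 + X 1 ^ 2) ^ k * XnPoly m ∨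
    p = (X 0 ^ 2 + X 1 ^ 2) ^ k * YnPoly m}

lemma XnPoly_mem_span_polarMonomials (m : ℕ) : XnPoly m ∈ Submodule.span ℝ polarMonomials :=
  Submodule.subset_span ⟨0, m, Or.inl (by simp)⟩

lemma YnPoly_mem_span_polarMonomials (m : ℕ) : YnPoly m ∈ Submodule.span ℝ polarMonomials :=
  Submodule.subset_span ⟨0, m, Or.inr (by simp)⟩

lemma pow_mul_mem_span_polarMonomials (k : ℕ) {p : MvPolynomial (Fin 2) ℝ}
    (hp : p ∈ Submodule.span ℝ polarMonomials) :
    (X 0 ^ 2 + X 1 ^ 2) ^ k * p ∈ Submodule.span ℝ polarMonomials := by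
  suffices Submodule.span ℝ polarMonomials ≤ (Submodule.span ℝ polarMonomials).comap
      (LinearMap.mulLeft ℝ ((X 0 ^ 2 + X 1 ^ 2) ^ k)) from this hp
  rw [Submodule.span_le]
  rintro _ ⟨j, m, rfl | rfl⟩ <;> refine Submodule.subset_span ⟨k + j, m, ?_⟩
  · exact Or.inl (by simp [pow_add, mul_assoc])
  · exact Or.inr (by simp [pow_add, mul_assoc])

lemma mul_mem_span_polarMonomials {p : MvPolynomial (Fin 2) ℝ}
    (hp : p ∈ Submodule.span ℝ polarMonomials) :
    (X 0 ^ 2 + X 1 ^ 2) * p ∈ Submodule.span ℝ polarMonomials := by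
  simpa using pow_mul_mem_span_polarMonomials 1 hp

lemma XnPoly_mul_X_mem_span_polarMonomials (m : ℕ) (i : Fin 2) :
    XnPoly m * X i ∈ Submodule.span ℝ polarMonomials := by
  have hx := XnPoly_mem_span_polarMonomials
  have hy := YnPoly_mem_span_polarMonomials
  match m, i with
  | 0, 0 => simpa [XnPoly_zero, XnPoly_one] using hx 1
  | 0, 1 => simpa [XnPoly_zero, YnPoly_one] using hy 1
  | m + 1, 0 =>
    rw [XnPoly_succ_mul_X_zero]
    exact Submodule.smul_mem _ _ (add_mem (hx _) (mul_mem_span_polarMonomials (hx m)))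
  | m + 1, 1 =>
    rw [XnPoly_succ_mul_X_one]
    exact Submodule.smul_mem _ _ (sub_mem (hy _) (mul_mem_span_polarMonomials (hy m)))

lemma YnPoly_mul_X_mem_span_polarMonomials (m : ℕ) (i : Fin 2) :
    YnPoly m * X i ∈ Submodule.span ℝ polarMonomials := by
  have hx := XnPoly_mem_span_polarMonomials
  have hy := YnPoly_mem_span_polarMonomials
  match m, i with
  | 0, _ => simp [YnPoly_zero]
  | m + 1, 0 =>
    rw [YnPoly_succ_mul_X_zero]
    exact Submodule.smul_mem _ _ (add_mem (hy _) (mul_mem_span_polarMonomials (hy m)))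
  | m + 1, 1 =>
    rw [YnPoly_succ_mul_X_one]
    exact Submodule.smul_mem _ _ (sub_mem (mul_mem_span_polarMonomials (hx m)) (hx _))

lemma mul_X_mem_span_polarMonomials (i : Fin 2) {p : MvPolynomial (Fin 2) ℝ}
    (hp : p ∈ Submodule.span ℝ polarMonomials) :
    p * X i ∈ Submodule.span ℝ polarMonomials := by
  suffices Submodule.span ℝ polarMonomials ≤
      (Submodule.span ℝ polarMonomials).comap (LinearMap.mulRight ℝ (X i)) from this hp
  rw [Submodule.span_le]
  rintro _ ⟨k, m, rfl | rfl⟩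
  · simpa [mul_assoc] using
      pow_mul_mem_span_polarMonomials k (XnPoly_mul_X_mem_span_polarMonomials m i)
  · simpa [mul_assoc] using
      pow_mul_mem_span_polarMonomials k (YnPoly_mul_X_mem_span_polarMonomials m i)

theorem span_polarMonomials : Submodule.span ℝ polarMonomials = ⊤ := by
  refine Submodule.eq_top_iff'.2 fun p => ?_
  induction p using MvPolynomial.induction_on with
  | C a =>
    rw [C_eq_smul_one, ← XnPoly_zero]
    exact Submodule.smul_mem _ a (XnPoly_mem_span_polarMonomials 0)
  | add p q hp hq => exact add_mem hp hq
  | mul_X p i hp => exact mul_X_mem_span_polarMonomials i hp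

section Rotation

/-- The endomorphism of `ℝ[s,t]` induced by the rotation `ρ_θ`, for `u = e^{iθ}`; on functions of
`w = s + i t` it is the substitution of `u⁻¹ w` for `w`. -/
noncomputable def rotAlgHom (u : Circle) : MvPolynomial (Fin 2) ℝ →ₐ[ℝ] MvPolynomial (Fin 2) ℝ :=
  aeval ![C (u : ℂ).re * X 0 + C (u : ℂ).im * X 1,
          - C (u : ℂ).im * X 0 + C (u : ℂ).re * X 1]

lemma rotAut_eq_rotAlgHom (n : ℕ) : rotAut n = rotAlgHom (Circle.exp (2 * π / n)) := by
  rw [rotAut, rotAlgHom, Circle.coe_exp, Complex.exp_ofReal_mul_I_re, Complex.exp_ofReal_mul_I_im]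

variable (u : Circle)

@[simp] lemma evalAt_rotAlgHom (c : ℂ) (p : MvPolynomial (Fin 2) ℝ) :
    evalAt c (rotAlgHom u p) = evalAt (conj (u : ℂ) * c) p := by
  suffices (evalAt c).comp (rotAlgHom u) = evalAt (conj (u : ℂ) * c) from
    DFunLike.congr_fun this p
  refine MvPolynomial.algHom_ext fun i => ?_
  fin_cases i
  · simp [rotAlgHom, evalAt]
  · simp [rotAlgHom, evalAt, add_comm]

lemma rotAlgHom_sq_add_sq : rotAlgHom u (X 0 ^ 2 + X 1 ^ 2) = X 0 ^ 2 + X 1 ^ 2 := by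
  have hnormSq (w : ℂ) : evalAt w (X 0 ^ 2 + X 1 ^ 2) = Complex.normSq w := by
    simp [Complex.normSq_apply, sq]
  refine ext_evalAt fun c => ?_
  rw [evalAt_rotAlgHom, hnormSq, hnormSq, map_mul, Complex.normSq_conj, Circle.normSq_coe, one_mul]

lemma rotAlgHom_XnPoly (m : ℕ) : rotAlgHom u (XnPoly m) =
    (u ^ m : ℂ).re • XnPoly m + (u ^ m : ℂ).im • YnPoly m :=
  ext_evalAt fun c => by simp [mul_pow, ← map_pow]

lemma rotAlgHom_YnPoly (m : ℕ) : rotAlgHom u (YnPoly m) =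
    (u ^ m : ℂ).re • YnPoly m - (u ^ m : ℂ).im • XnPoly m :=
  ext_evalAt fun c => by simp [mul_pow, ← map_pow, sub_eq_add_neg]

lemma rotAlgHom_inv_rotAlgHom (p : MvPolynomial (Fin 2) ℝ) :
    rotAlgHom u⁻¹ (rotAlgHom u p) = p :=
  ext_evalAt fun c => by
    rw [evalAt_rotAlgHom, evalAt_rotAlgHom, ← mul_assoc, ← map_mul, ← Circle.coe_mul,
      mul_inv_cancel, Circle.coe_one, map_one, one_mul]

/-- The operator `σ + σ⁻¹` on `ℝ[s,t]`, where `σ = rotAlgHom u`; it is diagonalizable over `ℝ` and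
every `σ`-invariant lies in its eigenspace for `2`. -/
noncomputable def rotAddInv : Module.End ℝ (MvPolynomial (Fin 2) ℝ) :=
  (rotAlgHom u).toLinearMap + (rotAlgHom u⁻¹).toLinearMap

lemma rotAddInv_apply (p : MvPolynomial (Fin 2) ℝ) :
    rotAddInv u p = rotAlgHom u p + rotAlgHom u⁻¹ p := rfl

lemma rotAddInv_pow_mul (k : ℕ) (p : MvPolynomial (Fin 2) ℝ) :
    rotAddInv u ((X 0 ^ 2 + X 1 ^ 2) ^ k * p) = (X 0 ^ 2 + X 1 ^ 2) ^ k * rotAddInv u p := by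
  rw [rotAddInv_apply, rotAddInv_apply, map_mul, map_pow, map_mul, map_pow, rotAlgHom_sq_add_sq,
    rotAlgHom_sq_add_sq, mul_add]

lemma rotAddInv_XnPoly (m : ℕ) :
    rotAddInv u (XnPoly m) = (2 * (u ^ m : ℂ).re) • XnPoly m := by
  rw [rotAddInv_apply, rotAlgHom_XnPoly, rotAlgHom_XnPoly, Circle.coe_inv_eq_conj, ← map_pow,
    Complex.conj_re, Complex.conj_im]
  module

lemma rotAddInv_YnPoly (m : ℕ) :
    rotAddInv u (YnPoly m) = (2 * (u ^ m : ℂ).re) • YnPoly m := by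
  rw [rotAddInv_apply, rotAlgHom_YnPoly, rotAlgHom_YnPoly, Circle.coe_inv_eq_conj, ← map_pow,
    Complex.conj_re, Complex.conj_im]
  module

lemma pow_mul_XnPoly_mem_eigenspace (k m : ℕ) :
    (X 0 ^ 2 + X 1 ^ 2) ^ k * XnPoly m ∈ (rotAddInv u).eigenspace (2 * (u ^ m : ℂ).re) := by
  rw [Module.End.mem_eigenspace_iff, rotAddInv_pow_mul, rotAddInv_XnPoly, mul_smul_comm]

lemma pow_mul_YnPoly_mem_eigenspace (k m : ℕ) :
    (X 0 ^ 2 + X 1 ^ 2) ^ k * YnPoly m ∈ (rotAddInv u).eigenspace (2 * (u ^ m : ℂ).re) := by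
  rw [Module.End.mem_eigenspace_iff, rotAddInv_pow_mul, rotAddInv_YnPoly, mul_smul_comm]

variable {u}

lemma mem_eigenspace_two_of_rotAlgHom_eq_self {p : MvPolynomial (Fin 2) ℝ}
    (hp : rotAlgHom u p = p) : p ∈ (rotAddInv u).eigenspace 2 := by
  have hinv : rotAlgHom u⁻¹ p = p := by
    simpa only [hp] using rotAlgHom_inv_rotAlgHom u p
  rw [Module.End.mem_eigenspace_iff, rotAddInv_apply, hp, hinv, two_smul]

end Rotation

section Invariants

/-- The subalgebra of `ℝ[s,t]` generated by `x_n`, `y_n` and `s² + t²`, which are the standard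
invariants of a rotation of order `n`. -/
noncomputable abbrev polarAlgebra (n : ℕ) : Subalgebra ℝ (MvPolynomial (Fin 2) ℝ) :=
  Algebra.adjoin ℝ {XnPoly n, YnPoly n, X 0 ^ 2 + X 1 ^ 2}

lemma XnPoly_YnPoly_mul_mem_polarAlgebra (n q : ℕ) :
    XnPoly (n * q) ∈ polarAlgebra n ∧ YnPoly (n * q) ∈ polarAlgebra n := by
  have hx : XnPoly n ∈ polarAlgebra n := Algebra.subset_adjoin (by simp)
  have hy : YnPoly n ∈ polarAlgebra n := Algebra.subset_adjoin (by simp)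
  induction q with
  | zero => simp [XnPoly_zero, YnPoly_zero]
  | succ q ih =>
    rw [Nat.mul_succ, XnPoly_add, YnPoly_add]
    exact ⟨sub_mem (mul_mem ih.1 hx) (mul_mem ih.2 hy),
      add_mem (mul_mem ih.1 hy) (mul_mem ih.2 hx)⟩

variable {u : Circle} {n : ℕ}

lemma rotAlgHom_eq_self_of_mem_polarAlgebra (hu : u ^ n = 1) {p : MvPolynomial (Fin 2) ℝ}
    (hp : p ∈ polarAlgebra n) : rotAlgHom u p = p := by
  have hun : (u : ℂ) ^ n = 1 := by rw [← Circle.coe_pow, hu, Circle.coe_one]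
  suffices polarAlgebra n ≤ AlgHom.equalizer (rotAlgHom u) (AlgHom.id ℝ _) from this hp
  refine Algebra.adjoin_le ?_
  rintro _ (rfl | rfl | rfl)
  · simp [rotAlgHom_XnPoly, hun]
  · simp [rotAlgHom_YnPoly, hun]
  · exact rotAlgHom_sq_add_sq u

lemma polarAlgebra_sup_iSup_eigenspace (hu : ∀ m : ℕ, u ^ m = 1 → n ∣ m) :
    (polarAlgebra n).toSubmodule ⊔ ⨆ ν ≠ 2, (rotAddInv u).eigenspace ν = ⊤ := by
  rw [eq_top_iff, ← span_polarMonomials, Submodule.span_le]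
  rintro p ⟨k, m, hp⟩
  by_cases hum : u ^ m = 1
  · obtain ⟨q, rfl⟩ := hu m hum
    have hz : (X 0 ^ 2 + X 1 ^ 2) ^ k ∈ polarAlgebra n :=
      pow_mem (Algebra.subset_adjoin (by simp)) k
    obtain ⟨hx, hy⟩ := XnPoly_YnPoly_mul_mem_polarAlgebra n q
    have hmem : p ∈ polarAlgebra n := by
      rcases hp with rfl | rfl
      · exact mul_mem hz hx
      · exact mul_mem hz hy
    exact Submodule.mem_sup_left hmem
  · have hne : 2 * (u ^ m : ℂ).re ≠ 2 := fun h =>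
      hum (circle_re_eq_one_iff.1 (by rw [Circle.coe_pow]; linarith))
    have hmem : p ∈ (rotAddInv u).eigenspace (2 * (u ^ m : ℂ).re) := by
      rcases hp with rfl | rfl
      · exact pow_mul_XnPoly_mem_eigenspace u k m
      · exact pow_mul_YnPoly_mem_eigenspace u k m
    exact Submodule.mem_sup_right (Submodule.mem_iSup_of_mem _ (Submodule.mem_iSup_of_mem hne hmem))

/-- For `n = 0` this covers the rotations of infinite order: their invariants are the polynomials
in `s² + t²`. -/
theorem invariants_eq_adjoin_general (hu : IsPrimitiveRoot u n) (f : MvPolynomial (Fin 2) ℝ) :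
    rotAlgHom u f = f ↔ f ∈ Algebra.adjoin ℝ {XnPoly n, YnPoly n, X 0 ^ 2 + X 1 ^ 2} := by
  have hinv : ∀ p ∈ polarAlgebra n, rotAlgHom u p = p := fun _ =>
    rotAlgHom_eq_self_of_mem_polarAlgebra hu.pow_eq_one
  have heigen : (polarAlgebra n).toSubmodule = (rotAddInv u).eigenspace 2 :=
    eq_eigenspace_of_sup_eq_top
      (fun p hp => mem_eigenspace_two_of_rotAlgHom_eq_self (hinv p hp))
      (polarAlgebra_sup_iSup_eigenspace hu.dvd_of_pow_eq_one)
  exact ⟨fun hf => heigen.ge (mem_eigenspace_two_of_rotAlgHom_eq_self hf), hinv f⟩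

end Invariants

/-- The subalgebra of `ρ_{2π/n}`-invariant polynomials in `ℝ[s,t]` is generated by
`x_n`, `y_n` and `s² + t²`. -/
theorem invariants_eq_adjoin (n : ℕ) (hn : 1 ≤ n) (f : MvPolynomial (Fin 2) ℝ) :
    rotAut n f = f ↔
      f ∈ Algebra.adjoin ℝ
        ({XnPoly n, YnPoly n, X 0 ^ 2 + X 1 ^ 2} : Set (MvPolynomial (Fin 2) ℝ)) := by
  rw [rotAut_eq_rotAlgHom]
  exact invariants_eq_adjoin_general (isPrimitiveRoot_circle_exp (by lia)) f
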